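/- Let n, k be positive natural numbers and w₀ ∈ ℝ. Let Wf, Wi, Wg : ℝ → Matrix (Fin n) (Fin k) ℝ be such that each entry has derivative, at w₀, given by the matrices Ef, Ei, Eg respectively; let bf, bi, bg : Fin n → ℝ; let v : ℝ → (Fin k → ℝ) with componentwise derivative v' at w₀; and let cprev : ℝ → (Fin n → ℝ) with componentwise derivative c' at w₀. Define the gates f w i = σ(((Wf w).mulVec (v w)) i + bf i), iGate w i = σ(((Wi w).mulVec (v w)) i + bi i), g w i = tanh(((Wg w).mulVec (v w)) i + bg i), and the cell state c w i = (f w i)·(cprev w i) + (iGate w i)·(g w i). Write F = diagonal of (f w₀), ψ = diag(f w₀ ⊙ (1 − f w₀) ⊙ cprev w₀) ⬝ Wf w₀ + diag((1 − (g w₀)²) ⊙ iGate w₀) ⬝ Wg w₀ + diag(iGate w₀ ⊙ (1 − iGate w₀) ⊙ g w₀) ⬝ Wi w₀, and k = diag(f w₀ ⊙ (1 − f w₀) ⊙ cprev w₀).mulVec (Ef.mulVec (v w₀)) + diag((1 − (g w₀)²) ⊙ iGate w₀).mulVec (Eg.mulVec (v w₀)) + diag(iGate w₀ ⊙ (1 −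 iGate w₀) ⊙ g w₀).mulVec (Ei.mulVec (v w₀)), with all diagonal matrices formed entrywise. Then for every i, the function w ↦ c w i has derivative (F.mulVec c') i + (ψ.mulVec v') i + k i at w₀. -/

import Mathlib

noncomputable def sigmoid (x : ℝ) : ℝ := 1 / (1 + Real.exp (-x))

theorem hasDerivAt_sigmoid (x : ℝ) :
    HasDerivAt sigmoid (sigmoid x * (1 - sigmoid x)) x := by
  have h : sigmoid = Real.sigmoid := by
    funext y
    simp [sigmoid, Real.sigmoid]
  rw [h]
  exact Real.hasDerivAt_sigmoid x

theorem hasDerivAt_tanh (x : ℝ) :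
    HasDerivAt Real.tanh (1 - Real.tanh x ^ 2) x := by
  have hcosh : Real.cosh x ≠ 0 := (Real.cosh_pos x).ne'
  have h := (Real.hasDerivAt_sinh x).div (Real.hasDerivAt_cosh x) hcosh
  refine (h.congr_deriv ?_).congr_of_eventuallyEq
    (.of_forall Real.tanh_eq_sinh_div_cosh)
  rw [Real.tanh_eq_sinh_div_cosh]
  field_simp

theorem hasDerivAt_mulVec_apply {m n : Type*} [Fintype n] {W : ℝ → Matrix m n ℝ}
    {E : Matrix m n ℝ} {v : ℝ → n → ℝ} {v' : n → ℝ} {w₀ : ℝ} {i : m}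
    (hW : ∀ j, HasDerivAt (fun w => W w i j) (E i j) w₀)
    (hv : ∀ j, HasDerivAt (fun w => v w j) (v' j) w₀) :
    HasDerivAt (fun w => (W w).mulVec (v w) i)
      (E.mulVec (v w₀) i + (W w₀).mulVec v' i) w₀ := by
  simp only [Matrix.mulVec, dotProduct, ← Finset.sum_add_distrib]
  exact HasDerivAt.fun_sum fun j _ => (hW j).mul (hv j)

/-- Corollary 2 of the paper: derivative of the LSTM cell state
`c w i = f w i * cprev w i + iGate w i * g w i`, expressed as
`dc/dw = F ⬝ c' + ψ ⬝ v' + k`. -/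
theorem lstm_cell_state_hasDerivAt
    (n k : ℕ) (hn : 0 < n) (hk : 0 < k) (w₀ : ℝ)
    (Wf Wi Wg : ℝ → Matrix (Fin n) (Fin k) ℝ)
    (Ef Ei Eg : Matrix (Fin n) (Fin k) ℝ)
    (hWf : ∀ i j, HasDerivAt (fun w => Wf w i j) (Ef i j) w₀)
    (hWi : ∀ i j, HasDerivAt (fun w => Wi w i j) (Ei i j) w₀)
    (hWg : ∀ i j, HasDerivAt (fun w => Wg w i j) (Eg i j) w₀)
    (bf bi bg : Fin n → ℝ)
    (v : ℝ → Fin k → ℝ) (v' : Fin k → ℝ)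
    (hv : ∀ j, HasDerivAt (fun w => v w j) (v' j) w₀)
    (cprev : ℝ → Fin n → ℝ) (c' : Fin n → ℝ)
    (hcprev : ∀ i, HasDerivAt (fun w => cprev w i) (c' i) w₀)
    (f iGate g c : ℝ → Fin n → ℝ)
    (hf : ∀ w i, f w i = sigmoid (((Wf w).mulVec (v w)) i + bf i))
    (hi : ∀ w i, iGate w i = sigmoid (((Wi w).mulVec (v w)) i + bi i))
    (hg : ∀ w i, g w i = Real.tanh (((Wg w).mulVec (v w)) i + bg i))
    (hc : ∀ w i, c w i = f w i * cprev w i + iGate w i * g w i)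
    (F : Matrix (Fin n) (Fin n) ℝ) (ψ : Matrix (Fin n) (Fin k) ℝ) (kvec : Fin n → ℝ)
    (hF : F = Matrix.diagonal (f w₀))
    (hψ : ψ =
        Matrix.diagonal (fun j => f w₀ j * (1 - f w₀ j) * cprev w₀ j) * Wf w₀
      + Matrix.diagonal (fun j => (1 - (g w₀ j) ^ 2) * iGate w₀ j) * Wg w₀
      + Matrix.diagonal (fun j => iGate w₀ j * (1 - iGate w₀ j) * g w₀ j) * Wi w₀)
    (hkvec : kvec =
        (Matrix.diagonal (fun j => f w₀ j * (1 - f w₀ j) * cprev w₀ j)).mulVec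
          (Ef.mulVec (v w₀))
      + (Matrix.diagonal (fun j => (1 - (g w₀ j) ^ 2) * iGate w₀ j)).mulVec
          (Eg.mulVec (v w₀))
      + (Matrix.diagonal (fun j => iGate w₀ j * (1 - iGate w₀ j) * g w₀ j)).mulVec
          (Ei.mulVec (v w₀))) :
    ∀ i, HasDerivAt (fun w => c w i)
      ((F.mulVec c') i + (ψ.mulVec v') i + kvec i) w₀ := by
  intro i
  have hfi : HasDerivAt (fun w => f w i)
      (f w₀ i * (1 - f w₀ i) * (Ef.mulVec (v w₀) i + (Wf w₀).mulVec v' i)) w₀ := by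
    simp only [hf]
    exact (hasDerivAt_sigmoid _).comp w₀
      ((hasDerivAt_mulVec_apply (hWf i) hv).add_const (bf i))
  have hii : HasDerivAt (fun w => iGate w i)
      (iGate w₀ i * (1 - iGate w₀ i) * (Ei.mulVec (v w₀) i + (Wi w₀).mulVec v' i)) w₀ := by
    simp only [hi]
    exact (hasDerivAt_sigmoid _).comp w₀
      ((hasDerivAt_mulVec_apply (hWi i) hv).add_const (bi i))
  have hgi : HasDerivAt (fun w => g w i)
      ((1 - g w₀ i ^ 2) * (Eg.mulVec (v w₀) i + (Wg w₀).mulVec v' i)) w₀ := by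
    simp only [hg]
    exact (hasDerivAt_tanh _).comp w₀
      ((hasDerivAt_mulVec_apply (hWg i) hv).add_const (bg i))
  simp only [hc]
  refine ((hfi.mul (hcprev i)).add (hii.mul hgi)).congr_deriv ?_
  simp only [hF, hψ, hkvec, Matrix.add_mulVec, ← Matrix.mulVec_mulVec, Pi.add_apply,
    Matrix.mulVec_diagonal]
  ring
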